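/- Let G be a finite group of order n > 1, let q be the smallest prime divisor of n and p the largest prime divisor of n. If q·ψ(G) ≥ ψ(C_n), then G is solvable and every Sylow p-subgroup of G contains a cyclic subgroup of index p. -/

import Mathlib

/-- `psi G` is the sum of the orders of all elements of the finite group `G`. -/
noncomputable def psi (G : Type*) [Group G] [Fintype G] : ℕ := ∑ x : G, orderOf x

/-- `psiC n` is the sum of the orders of all elements of the cyclic group `C_n`. -/
noncomputable def psiC (n : ℕ) : ℕ := ∑ k ∈ Finset.range n, addOrderOf (k : ZMod n)

/-!
Let `q` and `p` be the smallest and the largest prime divisor of `n = |G|`. Since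
`ψ(C_{r^a}) > r^{2a} r / (r + 1)` and `ψ(C_n)` is multiplicative in `n`, and since the product of
`(r + 1) / r` over the primes `r ∣ n` is at most the telescoping product `(p + 1) / q`, we get
`ψ(C_n) > q n² / (p + 1)`. So `ψ(G) > n² / (p + 1)`, and some `x` has order greater than
`n / (p + 1)`, that is, `⟨x⟩` has index at most `p`.

If the index is `p`, then `A = ⟨x⟩` is an abelian subgroup of prime index. When `A` is not normal,
`A ∩ gAg⁻¹` is central for `g ∉ A`, so `|A : Z(G) ∩ A| < p`. This forces fewer than `p` Sylow
`p`-subgroups, so the Sylow `p`-subgroup `P` is normal and `G = PA` is solvable.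

If the index is less than `p`, then `⟨x⟩` contains every Sylow `p`-subgroup `P`, so `P` is cyclic
and normal. It has a complement `H` by Schur–Zassenhaus, and `ψ(G) ≤ ψ(P) ψ(H)` passes the
hypothesis on to `H`, which is solvable by induction.

In both cases `|P : P ∩ ⟨x⟩|` is a power of `p` which is at most `p`: either it is `p`, or `P` is
cyclic and nontrivial.
-/

section CyclicGroups

theorem psi_eq_sum_divisors (G : Type*) [Group G] [Fintype G] [IsCyclic G] :
    psi G = ∑ d ∈ (Nat.card G).divisors, d.totient * d := by
  classical
  have order_mem_divisors (x : G) : orderOf x ∈ (Nat.card G).divisors :=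
    Nat.mem_divisors.2 ⟨orderOf_dvd_natCard x, Nat.card_pos.ne'⟩
  rw [psi, ← Finset.sum_fiberwise_of_maps_to fun x _ => order_mem_divisors x]
  refine Finset.sum_congr rfl fun d hd => ?_
  rw [Finset.sum_congr rfl fun x hx => (Finset.mem_filter.1 hx).2, Finset.sum_const, smul_eq_mul,
    IsCyclic.card_orderOf_eq_totient
      (Nat.card_eq_fintype_card (α := G) ▸ Nat.dvd_of_mem_divisors hd)]

theorem psi_multiplicative_zmod (n : ℕ) [NeZero n] : psi (Multiplicative (ZMod n)) = psiC n := by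
  refine Finset.sum_nbij' (fun x => x.toAdd.val) (fun k => .ofAdd (k : ZMod n))
    (fun x _ => Finset.mem_range.2 x.toAdd.val_lt) (fun _ _ => Finset.mem_univ _)
    (fun x _ => congrArg Multiplicative.ofAdd (ZMod.natCast_zmod_val x.toAdd))
    (fun k hk => ZMod.val_cast_of_lt (Finset.mem_range.1 hk)) fun x _ => ?_
  rw [ZMod.natCast_zmod_val, ← orderOf_ofAdd_eq_addOrderOf, ofAdd_toAdd]

theorem psiC_eq_sum_divisors (n : ℕ) : psiC n = ∑ d ∈ n.divisors, d.totient * d := by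
  rcases eq_or_ne n 0 with rfl | hn
  · simp [psiC]
  · have : NeZero n := ⟨hn⟩
    rw [← psi_multiplicative_zmod, psi_eq_sum_divisors, Nat.card_eq_fintype_card,
      Fintype.card_multiplicative, ZMod.card]

theorem psiC_one : psiC 1 = 1 := by simp [psiC_eq_sum_divisors]

theorem psi_eq_psiC (G : Type*) [Group G] [Fintype G] [IsCyclic G] :
    psi G = psiC (Nat.card G) := by
  rw [psi_eq_sum_divisors, psiC_eq_sum_divisors]

theorem psiC_mul_of_coprime {m n : ℕ} (h : m.Coprime n) : psiC (m * n) = psiC m * psiC n := by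
  let f : ArithmeticFunction ℕ := ⟨fun d => d.totient * d, by rw [mul_zero]⟩
  have hf : f.IsMultiplicative := ⟨by simp [f], fun {a b} hab => by
    simp only [f, ArithmeticFunction.coe_mk, Nat.totient_mul hab]
    ring⟩
  have psiC_eq (k : ℕ) : psiC k = (ArithmeticFunction.zeta * f) k := by
    have hsum := ArithmeticFunction.coe_zeta_mul_apply (f := f) (x := k)
    rw [ArithmeticFunction.natCoe_nat] at hsum
    rw [psiC_eq_sum_divisors, hsum]
    rfl
  simp only [psiC_eq]
  exact (ArithmeticFunction.isMultiplicative_zeta.mul hf).map_mul_of_coprime h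

theorem psiC_prime_pow_mul {p : ℕ} (hp : p.Prime) (a : ℕ) :
    psiC (p ^ a) * (p + 1) = (p ^ a) ^ 2 * p + 1 := by
  rw [psiC_eq_sum_divisors, Nat.sum_divisors_prime_pow hp]
  induction a with
  | zero => simp
  | succ a ih =>
    rw [Finset.sum_range_succ, add_mul, ih, Nat.totient_prime_pow_succ hp]
    obtain ⟨k, rfl⟩ := Nat.exists_eq_add_of_le hp.one_le
    rw [Nat.add_sub_cancel_left]
    ring

theorem sq_mul_prod_primeFactors_lt {n : ℕ} (hn : 1 < n) :
    n ^ 2 * ∏ r ∈ n.primeFactors, r < psiC n * ∏ r ∈ n.primeFactors, (r + 1) := by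
  have hn0 : n ≠ 0 := by omega
  have hfactor : ∏ r ∈ n.primeFactors, r ^ n.factorization r = n :=
    Nat.prod_factorization_pow_eq_self hn0
  calc n ^ 2 * ∏ r ∈ n.primeFactors, r
      = ∏ r ∈ n.primeFactors, (r ^ n.factorization r) ^ 2 * r := by
        rw [Finset.prod_mul_distrib, Finset.prod_pow, hfactor]
    _ < ∏ r ∈ n.primeFactors, psiC (r ^ n.factorization r) * (r + 1) := by
        refine Finset.prod_lt_prod_of_nonempty (fun r hr => ?_) (fun r hr => ?_)
          (Nat.nonempty_primeFactors.2 hn)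
        · have := Nat.pos_of_mem_primeFactors hr
          positivity
        · rw [psiC_prime_pow_mul (Nat.prime_of_mem_primeFactors hr)]
          exact Nat.lt_succ_self _
    _ = psiC n * ∏ r ∈ n.primeFactors, (r + 1) := by
        rw [Finset.prod_mul_distrib,
          Nat.multiplicative_factorization psiC (fun _ _ => psiC_mul_of_coprime) psiC_one hn0]
        rfl

theorem mul_prod_add_one_le_mul_prod {q m : ℕ} {s : Finset ℕ} (hqm : q ≤ m)
    (hs : ∀ r ∈ s, q ≤ r ∧ r < m) : q * ∏ r ∈ s, (r + 1) ≤ m * ∏ r ∈ s, r := by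
  induction s using Finset.induction_on_max generalizing m with
  | empty => simpa using hqm
  | insert a s hlt ih =>
    have ha : a ∉ s := fun h => (hlt a h).false
    obtain ⟨hqa, ham⟩ := hs a (Finset.mem_insert_self a s)
    rw [Finset.prod_insert ha, Finset.prod_insert ha]
    calc q * ((a + 1) * ∏ r ∈ s, (r + 1)) = (a + 1) * (q * ∏ r ∈ s, (r + 1)) := by ring
      _ ≤ m * (a * ∏ r ∈ s, r) := Nat.mul_le_mul ham
          (ih hqa fun r hr => ⟨(hs r (Finset.mem_insert_of_mem hr)).1, hlt r hr⟩)

theorem sq_mul_minFac_lt_psiC_mul {n p : ℕ} (hn : 1 < n)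
    (hp : ∀ r : ℕ, r.Prime → r ∣ n → r ≤ p) : n ^ 2 * n.minFac < psiC n * (p + 1) := by
  have hminFac : n.minFac ≤ p := hp _ (Nat.minFac_prime hn.ne') n.minFac_dvd
  have htelescope := mul_prod_add_one_le_mul_prod (s := n.primeFactors) (hminFac.trans p.le_succ)
    fun r hr => by
      obtain ⟨hr, hrn, -⟩ := Nat.mem_primeFactors.1 hr
      exact ⟨Nat.minFac_le_of_dvd hr.two_le hrn, Nat.lt_succ_of_le (hp r hr hrn)⟩
  refine lt_of_mul_lt_mul_right (a := ∏ r ∈ n.primeFactors, (r + 1)) ?_ (Nat.zero_le _)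
  calc n ^ 2 * n.minFac * ∏ r ∈ n.primeFactors, (r + 1)
      ≤ n ^ 2 * ((p + 1) * ∏ r ∈ n.primeFactors, r) := by
        rw [mul_assoc]
        exact Nat.mul_le_mul_left _ htelescope
    _ = (p + 1) * (n ^ 2 * ∏ r ∈ n.primeFactors, r) := by ring
    _ < (p + 1) * (psiC n * ∏ r ∈ n.primeFactors, (r + 1)) :=
        Nat.mul_lt_mul_of_pos_left (sq_mul_prod_primeFactors_lt hn) p.succ_pos
    _ = psiC n * (p + 1) * ∏ r ∈ n.primeFactors, (r + 1) := by ring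

end CyclicGroups

section OrderSums

open Subgroup

variable {G : Type*} [Group G]

theorem psi_mul_le_card_sq [Fintype G] {m : ℕ} (h : ∀ x : G, m ≤ (zpowers x).index) :
    psi G * m ≤ Nat.card G ^ 2 := by
  rw [psi, Finset.sum_mul, sq]
  calc ∑ x : G, orderOf x * m ≤ ∑ _x : G, Nat.card G := by
        refine Finset.sum_le_sum fun x _ => ?_
        rw [← (zpowers x).card_mul_index, Nat.card_zpowers]
        exact Nat.mul_le_mul_left _ (h x)
    _ = Nat.card G * Nat.card G := by
        rw [Finset.sum_const, smul_eq_mul, Finset.card_univ, Nat.card_eq_fintype_card]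

theorem exists_index_zpowers_le [Fintype G] {p : ℕ} (h1 : 1 < Nat.card G)
    (hp : ∀ r : ℕ, r.Prime → r ∣ Nat.card G → r ≤ p)
    (hpsi : psiC (Nat.card G) ≤ (Nat.card G).minFac * psi G) :
    ∃ x : G, (zpowers x).index ≤ p := by
  by_contra! hlt
  refine (sq_mul_minFac_lt_psiC_mul h1 hp).not_ge ?_
  calc psiC (Nat.card G) * (p + 1) ≤ (Nat.card G).minFac * psi G * (p + 1) := by gcongr
    _ = psi G * (p + 1) * (Nat.card G).minFac := by ring
    _ ≤ Nat.card G ^ 2 * (Nat.card G).minFac := by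
        gcongr
        exact psi_mul_le_card_sq hlt

theorem normal_zpowers_of_mem_isCyclic {P : Subgroup G} [P.Normal] [IsCyclic P] {u : G}
    (hu : u ∈ P) : (zpowers u).Normal := by
  refine ⟨fun y hy g => ?_⟩
  obtain ⟨k, rfl⟩ := mem_zpowers_iff.1 hy
  obtain ⟨m, hm⟩ := MonoidHom.map_cyclic (MulAut.conjNormal g : MulAut P).toMonoidHom
  have hconj : g * u * g⁻¹ = u ^ m := by simpa using congrArg Subtype.val (hm ⟨u, hu⟩)
  rw [← conj_zpow, hconj]
  exact zpow_mem (zpow_mem (mem_zpowers u) m) k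

theorem orderOf_mul_dvd_of_normal_zpowers {u : G} (hu : (zpowers u).Normal) (h : G) :
    orderOf (u * h) ∣ orderOf h * orderOf u := by
  have hpow : (u * h) ^ orderOf h ∈ zpowers u := by
    rw [← QuotientGroup.eq_one_iff, QuotientGroup.mk_pow, QuotientGroup.mk_mul,
      (QuotientGroup.eq_one_iff u).2 (mem_zpowers u), one_mul, ← QuotientGroup.mk_pow,
      pow_orderOf_eq_one, QuotientGroup.mk_one]
  rw [orderOf_dvd_iff_pow_eq_one, pow_mul, ← orderOf_dvd_iff_pow_eq_one]
  exact orderOf_dvd_of_mem_zpowers hpow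

theorem exists_isComplement'_coprime_card {N : Subgroup G} [N.Normal]
    (h : (Nat.card N).Coprime N.index) :
    ∃ H : Subgroup G, IsComplement' N H ∧ (Nat.card N).Coprime (Nat.card H) := by
  obtain ⟨H, hNH⟩ := exists_right_complement'_of_coprime h
  exact ⟨H, hNH, hNH.symm.index_eq_card ▸ h⟩

theorem psi_le_psi_mul_psi_of_isComplement' [Fintype G] {P H : Subgroup G} [P.Normal] [IsCyclic P]
    [Fintype P] [Fintype H] (hPH : IsComplement' P H) : psi G ≤ psi P * psi H := by
  calc psi G = ∑ z : P × H, orderOf (z.1 * z.2 : G) :=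
        ((Equiv.ofBijective _ hPH).sum_comp orderOf).symm
    _ ≤ ∑ z : P × H, orderOf z.1 * orderOf z.2 := by
        refine Finset.sum_le_sum fun ⟨u, h⟩ _ => ?_
        have hdvd := orderOf_mul_dvd_of_normal_zpowers (normal_zpowers_of_mem_isCyclic u.2) (h : G)
        rw [mul_comm, orderOf_coe, orderOf_coe] at hdvd
        exact Nat.le_of_dvd (Nat.mul_pos (orderOf_pos _) (orderOf_pos _)) hdvd
    _ = psi P * psi H := by rw [Fintype.sum_prod_type, psi, psi, Finset.sum_mul_sum]

theorem psiC_card_le_of_isComplement' [Fintype G] {P H : Subgroup G} [P.Normal] [IsCyclic P]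
    [Fintype H] [Nontrivial H] (hPH : IsComplement' P H)
    (hco : (Nat.card P).Coprime (Nat.card H))
    (hpsi : psiC (Nat.card G) ≤ (Nat.card G).minFac * psi G) :
    psiC (Nat.card H) ≤ (Nat.card H).minFac * psi H := by
  have := Fintype.ofFinite P
  have hpos : 0 < psi P := Finset.sum_pos (fun u _ => orderOf_pos u) Finset.univ_nonempty
  have hminFac : (Nat.card G).minFac ≤ (Nat.card H).minFac :=
    Nat.minFac_le_of_dvd (Nat.minFac_prime Finite.one_lt_card.ne').two_le
      ((Nat.minFac_dvd _).trans H.card_subgroup_dvd_card)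
  refine Nat.le_of_mul_le_mul_left ?_ hpos
  calc psi P * psiC (Nat.card H) = psiC (Nat.card G) := by
        rw [psi_eq_psiC, ← psiC_mul_of_coprime hco, hPH.card_mul_card]
    _ ≤ (Nat.card G).minFac * psi G := hpsi
    _ ≤ (Nat.card H).minFac * (psi P * psi H) :=
        Nat.mul_le_mul hminFac (psi_le_psi_mul_psi_of_isComplement' hPH)
    _ = psi P * ((Nat.card H).minFac * psi H) := by ring

end OrderSums

section AbelianSubgroupOfPrimeIndex

open Subgroup

variable {G : Type*} [Group G]

theorem isSolvable_of_sup_eq_top {N A : Subgroup G} [N.Normal] [Group.IsSolvable N]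
    [Group.IsSolvable A] (h : N ⊔ A = ⊤) : Group.IsSolvable G := by
  have hsurj : Function.Surjective ((QuotientGroup.mk' N).comp A.subtype) := by
    rw [← MonoidHom.range_eq_top, MonoidHom.range_comp, range_subtype, ← bot_sup_eq (map _ A),
      ← QuotientGroup.map_mk'_self N, ← Subgroup.map_sup, h, ← MonoidHom.range_eq_map,
      QuotientGroup.range_mk']
  exact (Group.isSolvable_iff_subgroup_quotient N).2
    ⟨inferInstance, Group.isSolvable_of_surjective hsurj⟩

theorem isCoatom_of_prime_index {A : Subgroup G} (hA : A.index.Prime) : IsCoatom A := by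
  refine ⟨fun h => ?_, fun K hAK => ?_⟩
  · rw [index_eq_one.2 h] at hA
    exact Nat.not_prime_one hA
  have hmul := relIndex_mul_index hAK.le
  rcases (Nat.dvd_prime hA).1 (index_dvd_of_le hAK.le) with h | h
  · exact index_eq_one.1 h
  · rw [h] at hmul
    have : A.relIndex K = 1 := Nat.eq_of_mul_eq_mul_right hA.pos (by rw [hmul, one_mul])
    exact absurd (relIndex_eq_one.1 this) hAK.not_ge

theorem centralizer_singleton_eq_of_isCoatom {A : Subgroup G} [IsMulCommutative A]
    (hA : IsCoatom A) {x : G} (hx : x ∈ A) (hxc : x ∉ center G) : centralizer {x} = A := by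
  have hle : A ≤ centralizer {x} :=
    (le_centralizer A).trans (centralizer_le (Set.singleton_subset_iff.2 hx))
  refine ((hA.le_iff).1 hle).resolve_left fun htop => hxc ?_
  exact Set.singleton_subset_iff.1 (centralizer_eq_top_iff_subset.1 htop)

theorem mem_center_of_conj_mem {A : Subgroup G} [IsMulCommutative A] (hA : IsCoatom A)
    (hnormal : ¬ A.Normal) {x g : G} (hx : x ∈ A) (hg : g ∉ A) (hgx : g⁻¹ * x * g ∈ A) :
    x ∈ center G := by
  by_contra hxc
  have hgxc : g⁻¹ * x * g ∉ center G := fun h => hxc <| by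
    simpa [mul_assoc] using (inferInstance : (center G).Normal).conj_mem _ h g
  -- `A` is the centralizer both of `x` and of its conjugate, so `g` normalizes it.
  have hg_norm : g ∈ normalizer (A : Set G) := by
    refine mem_normalizer_iff''.2 fun a => ?_
    conv_lhs => rw [← centralizer_singleton_eq_of_isCoatom hA hx hxc]
    conv_rhs => rw [← centralizer_singleton_eq_of_isCoatom hA hgx hgxc]
    rw [mem_centralizer_singleton_iff, mem_centralizer_singleton_iff]
    simpa [Commute, SemiconjBy] using (Commute.conj_iff (a := a) (b := x) g⁻¹).symm
  have hlt : A < normalizer (A : Set G) :=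
    SetLike.lt_iff_le_and_exists.2 ⟨le_normalizer, g, hg_norm, hg⟩
  exact hnormal (normalizer_eq_top_iff.1 (hA.2 _ hlt))

theorem relIndex_center_lt_index {A : Subgroup G} [A.FiniteIndex] [IsMulCommutative A]
    (hA : IsCoatom A) (hnormal : ¬ A.Normal) : (center G).relIndex A < A.index := by
  obtain ⟨g, -, hg⟩ := SetLike.exists_of_lt hA.lt_top
  have hstab : MulAction.stabilizer A (g : G ⧸ A) ≤ (center G).subgroupOf A := fun a ha =>
    mem_center_of_conj_mem hA hnormal a.2 hg <| by
      have := QuotientGroup.eq.1 (MulAction.mem_stabilizer_iff.1 ha).symm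
      simpa [mul_assoc] using this
  have horbit : ((1 : G) : G ⧸ A) ∉ MulAction.orbit A (g : G ⧸ A) := by
    rintro ⟨a, ha⟩
    have hag : (a * g : G)⁻¹ * 1 ∈ A := QuotientGroup.eq.1 ha
    rw [mul_one, inv_mem_iff] at hag
    exact hg ((A.mul_mem_cancel_left a.2).1 hag)
  calc (center G).relIndex A
      ≤ (MulAction.stabilizer A (g : G ⧸ A)).index := by
        refine Nat.le_of_dvd ?_ (index_dvd_of_le hstab)
        rw [MulAction.index_stabilizer]
        exact (Set.ncard_pos).2 (MulAction.nonempty_orbit _)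
    _ = (MulAction.orbit A (g : G ⧸ A)).ncard := MulAction.index_stabilizer A _
    _ < Nat.card (G ⧸ A) := by
        rw [← Set.ncard_univ]
        exact Set.ncard_lt_ncard ((Set.ssubset_univ_iff).2 fun h => horbit (h ▸ Set.mem_univ _))
    _ = A.index := rfl

theorem sylow_normal_of_index_normalizer_lt {p : ℕ} [hp : Fact p.Prime] [Finite (Sylow p G)]
    {P : Sylow p G} (h : (normalizer (P : Set G)).index < p) : (P : Subgroup G).Normal := by
  rw [← P.card_eq_index_normalizer] at h
  have hone : Nat.card (Sylow p G) = 1 :=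
    (card_sylow_modEq_one p G).eq_of_lt_of_lt h hp.out.one_lt
  have := (Nat.card_eq_one_iff_unique.1 hone).1
  exact P.normal_of_subsingleton

theorem sylow_normal_of_prime_index_of_not_normal [Finite G] {A : Subgroup G}
    [IsMulCommutative A] [hA : Fact A.index.Prime] (hnormal : ¬ A.Normal)
    (P : Sylow A.index G) : (P : Subgroup G).Normal := by
  refine sylow_normal_of_index_normalizer_lt <| (Nat.le_of_dvd ?_ ?_).trans_lt
    (relIndex_center_lt_index (isCoatom_of_prime_index hA.out) hnormal)
  · exact Nat.pos_of_ne_zero index_ne_zero_of_finite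
  have hdvd : (normalizer (P : Set G)).index ∣ (center G).relIndex A * A.index := by
    rw [← inf_relIndex_right, relIndex_mul_index inf_le_right]
    exact index_dvd_of_le (inf_le_left.trans (center_le_normalizer _))
  refine Nat.Coprime.dvd_of_dvd_mul_right (Nat.Coprime.symm ?_) hdvd
  exact hA.out.coprime_iff_not_dvd.2 fun h =>
    P.not_dvd_index (h.trans (index_dvd_of_le le_normalizer))

theorem isSolvable_of_prime_index [Finite G] {A : Subgroup G} [IsMulCommutative A]
    (hA : A.index.Prime) : Group.IsSolvable G := by
  have := Fact.mk hA
  have hA_solvable : Group.IsSolvable A := Group.isSolvable_of_comm mul_comm'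
  by_cases hnormal : A.Normal
  · have hcyclic := isCyclic_of_prime_card (α := G ⧸ A) A.index_eq_card.symm
    exact (Group.isSolvable_iff_subgroup_quotient A).2
      ⟨hA_solvable, Group.isSolvable_of_comm mul_comm'⟩
  obtain ⟨P⟩ : Nonempty (Sylow A.index G) := inferInstance
  have hP_normal := sylow_normal_of_prime_index_of_not_normal hnormal P
  have hP_not_le : ¬ (P : Subgroup G) ≤ A := fun h => P.not_dvd_index (index_dvd_of_le h)
  have hP_nilpotent := P.isPGroup'.isNilpotent
  exact isSolvable_of_sup_eq_top ((isCoatom_of_prime_index hA).2 _ (right_lt_sup.2 hP_not_le))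

end AbelianSubgroupOfPrimeIndex

section PGroups

open Subgroup

variable {G : Type*} [Group G] {p : ℕ} [hp : Fact p.Prime]

theorem exists_index_eq_of_isPGroup [Finite G] [Nontrivial G] (hG : IsPGroup p G) :
    ∃ K : Subgroup G, K.index = p := by
  obtain ⟨n, hn0, hn⟩ := hG.nontrivial_iff_card.1 inferInstance
  obtain ⟨m, rfl⟩ := Nat.exists_eq_succ_of_ne_zero hn0.ne'
  obtain ⟨K, hK⟩ := Sylow.exists_subgroup_card_pow_prime p (hn ▸ pow_dvd_pow p m.le_succ)
  refine ⟨K, Nat.eq_of_mul_eq_mul_left Nat.card_pos (K.card_mul_index.trans ?_)⟩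
  rw [hn, hK, pow_succ]

variable {A P : Subgroup G} [A.FiniteIndex]

theorem relIndex_le_index : A.relIndex P ≤ A.index := by
  rw [← relIndex_top_right A]
  refine relIndex_le_of_le_right le_top ?_
  rw [relIndex_top_right]
  exact index_ne_zero_of_finite

theorem relIndex_eq_one_or_eq_of_isPGroup (hP : IsPGroup p P) (hA : A.index ≤ p) :
    A.relIndex P = 1 ∨ A.relIndex P = p := by
  obtain ⟨k, hk⟩ := hP.index (A.subgroupOf P)
  have hle : p ^ k ≤ p ^ 1 := by
    rw [← hk, pow_one]
    exact relIndex_le_index.trans hA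
  have hk1 : k ≤ 1 := (Nat.pow_le_pow_iff_right hp.out.one_lt).1 hle
  rw [relIndex, hk]
  interval_cases k <;> simp

theorem le_of_isPGroup_of_index_lt (hP : IsPGroup p P) (hA : A.index < p) : P ≤ A :=
  relIndex_eq_one.1 <| (relIndex_eq_one_or_eq_of_isPGroup hP hA.le).resolve_right
    (relIndex_le_index.trans_lt hA).ne

theorem exists_isCyclic_le_index_subgroupOf_eq [IsCyclic A] [Finite P] [Nontrivial P]
    (hP : IsPGroup p P) (hA : A.index ≤ p) :
    ∃ H ≤ P, IsCyclic H ∧ (H.subgroupOf P).index = p := by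
  rcases relIndex_eq_one_or_eq_of_isPGroup hP hA with h | h
  · obtain ⟨K, hK⟩ := exists_index_eq_of_isPGroup hP
    have hKP : K.map P.subtype ≤ P := map_subtype_le K
    refine ⟨K.map P.subtype, hKP, Subgroup.isCyclic_of_le (hKP.trans (relIndex_eq_one.1 h)), ?_⟩
    rwa [subgroupOf, comap_map_eq_self_of_injective P.subtype_injective]
  · refine ⟨A ⊓ P, inf_le_right, Subgroup.isCyclic_of_le inf_le_left, ?_⟩
    rwa [inf_subgroupOf_right]

theorem sylow_normal_of_index_lt [Finite (Sylow p G)] [IsMulCommutative A]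
    (hA : A.index < p) (P : Sylow p G) : (P : Subgroup G).Normal := by
  have hPA : (P : Subgroup G) ≤ A := le_of_isPGroup_of_index_lt P.isPGroup' hA
  have hA_norm : A ≤ normalizer (P : Set G) :=
    (le_centralizer A).trans ((centralizer_le hPA).trans (centralizer_le_normalizer _))
  exact sylow_normal_of_index_normalizer_lt ((index_antitone hA_norm).trans_lt hA)

end PGroups

theorem isSolvable_of_psiC_card_le {G : Type*} [Group G] [Fintype G]
    (hpsi : psiC (Nat.card G) ≤ (Nat.card G).minFac * psi G) : Group.IsSolvable G := by
  induction hN : Nat.card G using Nat.strong_induction_on generalizing G with | _ N ih => ?_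
  rcases subsingleton_or_nontrivial G with _ | _
  · infer_instance
  have h1 : 1 < Nat.card G := Finite.one_lt_card
  obtain ⟨p, hp_mem, hp_max⟩ : ∃ p ∈ (Nat.card G).primeFactors,
      ∀ r ∈ (Nat.card G).primeFactors, r ≤ p :=
    Finset.exists_max_image _ id (Nat.nonempty_primeFactors.2 h1)
  obtain ⟨hp, hp_dvd, hG0⟩ := Nat.mem_primeFactors.1 hp_mem
  obtain ⟨x, hx⟩ := exists_index_zpowers_le h1
    (fun r hr hrG => hp_max r (Nat.mem_primeFactors.2 ⟨hr, hrG, hG0⟩)) hpsi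
  have := Fact.mk hp
  rcases hx.eq_or_lt with hx_eq | hx_lt
  · exact isSolvable_of_prime_index (A := Subgroup.zpowers x) (hx_eq ▸ hp)
  obtain ⟨P⟩ : Nonempty (Sylow p G) := inferInstance
  have hP_normal := sylow_normal_of_index_lt hx_lt P
  have hP_cyclic : IsCyclic P :=
    Subgroup.isCyclic_of_le (le_of_isPGroup_of_index_lt P.isPGroup' hx_lt)
  have hP_nontrivial : Nontrivial P :=
    (Subgroup.nontrivial_iff_ne_bot _).2 (P.ne_bot_of_dvd_card hp_dvd)
  have hP_solvable : Group.IsSolvable P := Group.isSolvable_of_comm mul_comm'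
  obtain ⟨H, hPH, hcoprime⟩ := exists_isComplement'_coprime_card P.card_coprime_index
  have hH_solvable : Group.IsSolvable H := by
    rcases subsingleton_or_nontrivial H with _ | _
    · infer_instance
    have := Fintype.ofFinite H
    have hlt : Nat.card H < N := by
      rw [← hN, ← hPH.card_mul_card]
      exact (Nat.lt_mul_iff_one_lt_left Nat.card_pos).2 Finite.one_lt_card
    exact ih _ hlt (psiC_card_le_of_isComplement' hPH hcoprime hpsi) rfl
  exact isSolvable_of_sup_eq_top hPH.sup_eq_top

theorem solvable_of_minFac_mul_psi_ge {G : Type*} [Group G] [Fintype G] (n p : ℕ)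
    (hn : Fintype.card G = n) (h1 : 1 < n)
    (hp : p.Prime) (hpd : p ∣ n) (hpmax : ∀ r : ℕ, r.Prime → r ∣ n → r ≤ p)
    (hpsi : psiC n ≤ n.minFac * psi G) :
    IsSolvable G ∧
    ∀ P : Sylow p G, ∃ H : Subgroup G, H ≤ (P : Subgroup G) ∧ IsCyclic H ∧
      (H.subgroupOf (P : Subgroup G)).index = p := by
  have := Fact.mk hp
  rw [← Nat.card_eq_fintype_card] at hn
  subst hn
  obtain ⟨x, hx⟩ := exists_index_zpowers_le h1 hpmax hpsi
  refine ⟨isSolvable_of_psiC_card_le hpsi, fun P => ?_⟩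
  have hP_nontrivial : Nontrivial P :=
    (Subgroup.nontrivial_iff_ne_bot _).2 (P.ne_bot_of_dvd_card hpd)
  exact exists_isCyclic_le_index_subgroupOf_eq P.isPGroup' hx
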